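/- arXiv:2601.18715 — 7 statements merged into one kernel-verified Lean document; each statement's English description precedes it below -/
import Mathlib

section
/- Let S be a finite nonempty set of positive integers and let v_S be the sink-subtraction nim-value function of S. Then the nim-sequence of S is eventually periodic: there exist a natural number N and a positive integer p such that v_S(x + p) = v_S(x) for every x ≥ N. -/
/-- The minimum excludant of a finite set of naturals. -/
noncomputable def mex (A : Finset ℕ) : ℕ := sInf {n : ℕ | n ∉ A}

/-- The sink-subtraction nim-value function: `sinkVal S 0 = 0`, and for `x ≥ 1`,
`sinkVal S x = mex { sinkVal S (x ∸ s) : s ∈ S }` (when every `s ∈ S` is positive,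
since `(x+1) - s = x - (s-1)` in truncated subtraction). -/
noncomputable def sinkVal (S : Finset ℕ) : ℕ → ℕ
  | 0 => 0
  | x + 1 => mex (S.image fun s => sinkVal S (x - (s - 1)))
termination_by x => x
decreasing_by omega

theorem mex_le_card (A : Finset ℕ) : mex A ≤ A.card := by
  by_contra h
  push Not at h
  have hsub : Finset.range (A.card + 1) ⊆ A := by
    intro n hn
    by_contra hnA
    have h1 : mex A ≤ n := Nat.sInf_le hnA
    have := Finset.mem_range.1 hn
    omega
  have := Finset.card_le_card hsub
  simp at this

theorem sinkVal_lt (S : Finset ℕ) (x : ℕ) : sinkVal S x < S.card + 1 := by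
  cases x with
  | zero => rw [sinkVal]; omega
  | succ x =>
    rw [sinkVal]
    exact Nat.lt_succ_of_le ((mex_le_card _).trans Finset.card_image_le)

theorem stmt0 (S : Finset ℕ) (hne : S.Nonempty) (hpos : ∀ s ∈ S, 0 < s) :
    ∃ (N p : ℕ), 0 < p ∧ ∀ x : ℕ, N ≤ x → sinkVal S (x + p) = sinkVal S x := by
  obtain ⟨a, b, hab, hw⟩ : ∃ a b : ℕ, a < b ∧
      ∀ i ≤ S.sup id, sinkVal S (a + i) = sinkVal S (b + i) := by
    obtain ⟨a, b, hab, hw⟩ := Finite.exists_ne_map_eq_of_infinite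
      (fun (x : ℕ) (i : Fin (S.sup id + 1)) =>
        (⟨sinkVal S (x + i), sinkVal_lt S _⟩ : Fin (S.card + 1)))
    have key : ∀ i ≤ S.sup id, sinkVal S (a + i) = sinkVal S (b + i) := by
      intro i hi
      have := congrFun hw ⟨i, Nat.lt_succ_of_le hi⟩
      simpa using this
    rcases lt_or_gt_of_ne hab with h | h
    · exact ⟨a, b, h, key⟩
    · exact ⟨b, a, h, fun i hi => (key i hi).symm⟩
  have main : ∀ k, sinkVal S (a + k) = sinkVal S (b + k) := by
    intro k
    induction k using Nat.strong_induction_on with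
    | _ k ih =>
      by_cases hk : k ≤ S.sup id
      · exact hw k hk
      · obtain ⟨j, rfl⟩ : ∃ j, k = j + 1 := ⟨k - 1, by omega⟩
        rw [← Nat.add_assoc, ← Nat.add_assoc, sinkVal, sinkVal]
        congr 1
        apply Finset.image_congr
        intro s hs
        have h1 : s ≤ S.sup id := Finset.le_sup (f := id) hs
        have h2 := hpos s hs
        have e1 : a + j - (s - 1) = a + (j - (s - 1)) := by omega
        have e2 : b + j - (s - 1) = b + (j - (s - 1)) := by omega
        simp only [e1, e2]
        exact ih _ (by omega)
  refine ⟨a, b - a, by omega, fun x hx => ?_⟩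
  have := main (x - a)
  rw [show x + (b - a) = b + (x - a) by omega, ← this]
  congr 1
  omega
end

section
/- Let S be a finite nonempty set of positive integers and let f : ℤ → ℕ be any function (an arbitrary assignment of forced nim-values to the non-positive integers). Define w : ℤ → ℕ by w(x) = f(x) for x ≤ 0 and, for x ≥ 1, w(x) = mex { w(x − s) : s ∈ S }. Then the sequence (w(x))_{x ≥ 1} is eventually periodic: there exist a natural number N ≥ 1 and a positive integer p such that w(x + p) = w(x) for every integer x ≥ N. -/
theorem stmt3 (S : Finset ℕ) (hne : S.Nonempty) (hpos : ∀ s ∈ S, 0 < s)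
    (f : ℤ → ℕ) (w : ℤ → ℕ)
    (hw0 : ∀ x : ℤ, x ≤ 0 → w x = f x)
    (hwrec : ∀ x : ℤ, 1 ≤ x → w x = mex (S.image fun s : ℕ => w (x - (s : ℤ)))) :
    ∃ (N : ℤ) (p : ℤ), 1 ≤ N ∧ 0 < p ∧ ∀ x : ℤ, N ≤ x → w (x + p) = w x := by
  have hb : ∀ x : ℤ, 1 ≤ x → w x < S.card + 1 := by
    intro x hx
    rw [hwrec x hx]
    have h1 := mex_le_card (S.image fun s : ℕ => w (x - (s : ℤ)))
    have h2 : (S.image fun s : ℕ => w (x - (s : ℤ))).card ≤ S.card := Finset.card_image_le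
    omega
  let m := S.sup id
  have hm : ∀ s ∈ S, s ≤ m := fun s hs => Finset.le_sup (f := id) hs
  let g : ℕ → (Fin m → Fin (S.card + 1)) := fun n i =>
    ⟨w ((n : ℤ) + 1 + (i : ℕ)), hb _ (by omega)⟩
  have key : ∃ a b : ℕ, a < b ∧ g a = g b := by
    obtain ⟨a, b, hab, h⟩ := Finite.exists_ne_map_eq_of_infinite g
    rcases lt_or_gt_of_ne hab with h' | h'
    · exact ⟨a, b, h', h⟩
    · exact ⟨b, a, h', h.symm⟩
  obtain ⟨a, b, hab, hg⟩ := key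
  refine ⟨(a : ℤ) + 1, (b : ℤ) - a, by omega, by omega, ?_⟩
  have main : ∀ k : ℕ, w ((b : ℤ) + 1 + k) = w ((a : ℤ) + 1 + k) := by
    intro k
    induction k using Nat.strong_induction_on with
    | _ k ih =>
      by_cases hk : k < m
      · have := congrArg Fin.val (congrFun hg ⟨k, hk⟩)
        exact this.symm
      · rw [hwrec _ (by omega), hwrec ((a : ℤ) + 1 + k) (by omega)]
        congr 1
        apply Finset.image_congr
        intro s hs
        have h1 := hm s hs
        have h2 := hpos s hs
        have h3 := ih (k - s) (by omega)
        rw [Nat.cast_sub (by omega)] at h3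
        simpa only [add_sub_assoc] using h3
  intro x hx
  have h := main (x - (a + 1)).toNat
  rw [Int.toNat_of_nonneg (by omega)] at h
  convert h using 2 <;> ring
end

section
/- Let m and δ be positive integers, let S = {m, m+δ, 2m+δ}, let d = δ mod 2m, and define p = 3m + 2δ − d if d ≤ m, and p = m·(m + 2δ + d)/gcd(m,d) if m < d < 2m (gcd(m,d) divides m·(m + 2δ + d)). Then the sink-subtraction nim-sequence of S is purely periodic with period p: for every x ≥ 1, v_S(x + p) = v_S(x). -/
theorem mex_eq_of {A : Finset ℕ} {n : ℕ} (h1 : n ∉ A) (h2 : ∀ k < n, k ∈ A) : mex A = n := by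
  unfold mex
  apply le_antisymm
  · exact Nat.sInf_le h1
  · by_contra hlt
    push Not at hlt
    have hne : ({n : ℕ | n ∉ A} : Set ℕ).Nonempty := ⟨n, h1⟩
    exact Nat.sInf_mem hne (h2 _ hlt)

theorem mex3_0 {a b c : ℕ} (h : a ≠ 0 ∧ b ≠ 0 ∧ c ≠ 0) : mex {a, b, c} = 0 := by
  apply mex_eq_of
  · simp; omega
  · intro k hk; omega

theorem mex3_1 {a b c : ℕ} (h : a ≠ 1 ∧ b ≠ 1 ∧ c ≠ 1) (h0 : a = 0 ∨ b = 0 ∨ c = 0) :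
    mex {a, b, c} = 1 := by
  apply mex_eq_of
  · simp; omega
  · intro k hk; simp; omega

theorem mex3_2 {a b c : ℕ} (h : a ≠ 2 ∧ b ≠ 2 ∧ c ≠ 2) (h0 : a = 0 ∨ b = 0 ∨ c = 0)
    (h1 : a = 1 ∨ b = 1 ∨ c = 1) : mex {a, b, c} = 2 := by
  apply mex_eq_of
  · simp; omega
  · intro k hk; simp; omega

theorem mex3_3 {a b c : ℕ} (h0 : a = 0 ∨ b = 0 ∨ c = 0)
    (h1 : a = 1 ∨ b = 1 ∨ c = 1) (h2 : a = 2 ∨ b = 2 ∨ c = 2) : mex {a, b, c} = 3 := by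
  apply mex_eq_of
  · simp; omega
  · intro k hk; simp; omega

/-- What is known about every row just before its `n`-th 12-phase. -/
structure Pre (V : ℤ → ℤ → ℕ) (A : ℕ → ℤ → ℤ) (n : ℕ) : Prop where
  last : ∀ j, V (A n j - 1) j = 0
  mem : ∀ j i, A n (j + 1) ≤ i → i < A n j → V i j = 0 ∨ V i j = 3
  two : ∀ j i, A n (j + 1) ≤ i → i + 1 < A n j → V i j = 0 ∨ V (i + 1) j = 0
  before : ∀ j, V (A n (j + 1) - 1) j = 2 ∨ V (A n (j + 1) - 1) j = 0

/-- Combinatorial data describing the phases. -/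
structure Sys (V : ℤ → ℤ → ℕ) (A B : ℕ → ℤ → ℤ) : Prop where
  zero : ∀ i j, i < A 0 j → V i j = 0
  recur : ∀ i j, A 0 j ≤ i → V i j = mex {V (i - 1) j, V i (j - 1), V (i - 1) (j - 1)}
  succ : ∀ n j, A (n + 1) j = B n (j - 1)
  even : ∀ n j, (B n j - A n j) % 2 = 0
  lt : ∀ n j, A n j < B n j
  lo : ∀ n j, A n (j - 1) ≤ B n j
  hi : ∀ n j, B n j ≤ A n (j - 1) + 1
  dec : ∀ n j, A n j < A n (j - 1)

namespace Sys
variable {V : ℤ → ℤ → ℕ} {A B : ℕ → ℤ → ℤ}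

theorem A_lt (h : Sys V A B) (n : ℕ) (j : ℤ) : A n j < A (n + 1) j := by
  have := h.succ n j
  have := h.lt n (j - 1)
  have := h.dec n j
  omega

theorem A_ge (h : Sys V A B) (n : ℕ) (j : ℤ) : A 0 j + n ≤ A n j := by
  induction n with
  | zero => simp
  | succ n ih => have := h.A_lt n j; push_cast; omega

theorem pre0 (h : Sys V A B) : Pre V A 0 where
  last j := h.zero _ _ (by omega)
  mem j i _ h2 := Or.inl (h.zero _ _ h2)
  two j i _ h2 := Or.inl (h.zero _ _ (by omega))
  before j := Or.inr (h.zero _ _ (by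
    have := h.dec 0 (j + 1); rw [add_sub_cancel_right] at this; omega))

theorem first (h : Sys V A B) {n : ℕ} (hp : Pre V A n) (j : ℤ) : V (A n j) j = 1 := by
  have hge := h.A_ge n j
  rw [h.recur _ _ (by omega)]
  have h1 := hp.last j
  have h2 := hp.mem (j - 1) (A n j) (by simp) (h.dec n j)
  have h3 := hp.before (j - 1)
  rw [sub_add_cancel] at h3
  apply mex3_1 <;> omega

theorem p12 (h : Sys V A B) {n : ℕ} (hp : Pre V A n) (j : ℤ) (k : ℕ) (hk : A n j + k < B n j) :
    (k % 2 = 0 → V (A n j + k) j = 1) ∧ (k % 2 = 1 → V (A n j + k) j = 2) := by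
  induction k with
  | zero => simpa using h.first hp j
  | succ k ih =>
    push_cast at hk ⊢
    have ih := ih (by omega)
    have hge := h.A_ge n j
    have hev := h.even n j
    have hhi := h.hi n j
    have hW : A n j + (k + 1) - 1 = A n j + k := by ring
    rw [h.recur _ _ (by omega), hW]
    by_cases hc : A n j + (k + 1) < A n (j - 1)
    · have s1 := hp.mem (j - 1) (A n j + (k + 1)) (by rw [sub_add_cancel]; omega) hc
      have s2 := hp.mem (j - 1) (A n j + k) (by rw [sub_add_cancel]; omega) (by omega)
      have s3 := hp.two (j - 1) (A n j + k) (by rw [sub_add_cancel]; omega) (by omega)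
      rw [add_assoc] at s3
      refine ⟨fun hk2 => ?_, fun hk2 => ?_⟩
      · apply mex3_1 <;> omega
      · apply mex3_2 <;> omega
    · have e : A n j + (k + 1) = A n (j - 1) := by omega
      have s1 := h.first hp (j - 1)
      have s2 := hp.last (j - 1)
      rw [← e] at s1 s2
      rw [hW] at s2
      refine ⟨fun hk2 => by omega, fun hk2 => ?_⟩
      apply mex3_2 <;> omega

theorem p12' (h : Sys V A B) {n : ℕ} (hp : Pre V A n) (i j : ℤ) (h1 : A n j ≤ i)
    (h2 : i < B n j) :
    ((i - A n j) % 2 = 0 → V i j = 1) ∧ ((i - A n j) % 2 = 1 → V i j = 2) := by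
  obtain ⟨k, hk⟩ := Int.eq_ofNat_of_zero_le (sub_nonneg.mpr h1)
  have e : i = A n j + k := by omega
  have := h.p12 hp j k (by omega)
  rw [← e] at this
  omega

theorem p03 (h : Sys V A B) {n : ℕ} (hp : Pre V A n) (j : ℤ) (k : ℕ)
    (hk : B n j + k < A (n + 1) j) :
    ((A (n + 1) j - (B n j + k)) % 2 = 1 → V (B n j + k) j = 0) ∧
    ((A (n + 1) j - (B n j + k)) % 2 = 0 → V (B n j + k) j = 3) := by
  have hge := h.A_ge n j
  have hlt := h.lt n j
  have hev := h.even n j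
  have hev' := h.even n (j - 1)
  have hhi := h.hi n j
  have hlo := h.lo n j
  have hs := h.succ n j
  induction k with
  | zero =>
    simp only [Nat.cast_zero, add_zero] at hk ⊢
    rw [h.recur _ _ (by omega)]
    have w := h.p12' hp (B n j - 1) j (by omega) (by omega)
    have s := h.p12' hp (B n j) (j - 1) (by omega) (by omega)
    by_cases hc : B n j = A n (j - 1)
    · have t := hp.last (j - 1)
      rw [← hc] at t
      refine ⟨fun hk2 => by omega, fun hk2 => ?_⟩
      apply mex3_3 <;> omega
    · have t := h.p12' hp (B n j - 1) (j - 1) (by omega) (by omega)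
      refine ⟨fun hk2 => ?_, fun hk2 => by omega⟩
      apply mex3_0 ; omega
  | succ k ih =>
    push_cast at hk ⊢
    have ih := ih (by omega)
    have hW : B n j + (k + 1) - 1 = B n j + k := by ring
    rw [h.recur _ _ (by omega), hW]
    have s := h.p12' hp (B n j + (k + 1)) (j - 1) (by omega) (by omega)
    have t := h.p12' hp (B n j + k) (j - 1) (by omega) (by omega)
    refine ⟨fun hk2 => ?_, fun hk2 => ?_⟩
    · apply mex3_0; omega
    · apply mex3_3 <;> omega

theorem p03' (h : Sys V A B) {n : ℕ} (hp : Pre V A n) (i j : ℤ) (h1 : B n j ≤ i)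
    (h2 : i < A (n + 1) j) :
    ((A (n + 1) j - i) % 2 = 1 → V i j = 0) ∧ ((A (n + 1) j - i) % 2 = 0 → V i j = 3) := by
  obtain ⟨k, hk⟩ := Int.eq_ofNat_of_zero_le (sub_nonneg.mpr h1)
  have e : i = B n j + k := by omega
  have := h.p03 hp j k (by omega)
  rw [← e] at this
  exact this

theorem BA (h : Sys V A B) (n : ℕ) (j : ℤ) : B n j < A (n + 1) j := by
  have := h.succ n j
  have h2 := h.dec (n + 1) (j + 1)
  have h3 := h.succ n (j + 1)
  rw [add_sub_cancel_right] at h2 h3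
  omega

theorem preS (h : Sys V A B) {n : ℕ} (hp : Pre V A n) : Pre V A (n + 1) := by
  have hs : ∀ j, A (n + 1) (j + 1) = B n j := fun j => by
    have := h.succ n (j + 1); rwa [add_sub_cancel_right] at this
  refine ⟨fun j => ?_, fun j i h1 h2 => ?_, fun j i h1 h2 => ?_, fun j => ?_⟩
  · have := h.BA n j
    have := h.p03' hp (A (n + 1) j - 1) j (by omega) (by omega)
    omega
  · rw [hs] at h1
    have := h.p03' hp i j h1 h2
    omega
  · rw [hs] at h1
    have := h.p03' hp i j h1 (by omega)
    have := h.p03' hp (i + 1) j (by omega) h2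
    omega
  · rw [hs]
    have := h.lt n j
    have := h.even n j
    have := h.p12' hp (B n j - 1) j (by omega) (by omega)
    omega

theorem pre (h : Sys V A B) (n : ℕ) : Pre V A n := by
  induction n with
  | zero => exact h.pre0
  | succ n ih => exact h.preS ih

theorem cover (h : Sys V A B) (i j : ℤ) (hi : A 0 j ≤ i) :
    ∃ n, A n j ≤ i ∧ i < A (n + 1) j := by
  by_contra hcon
  push Not at hcon
  have key : ∀ n, A n j ≤ i := by
    intro n
    induction n with
    | zero => exact hi
    | succ n ih => exact hcon n ih
  have h1 := h.A_ge (i - A 0 j + 1).toNat j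
  have h2 := key (i - A 0 j + 1).toNat
  omega

theorem shift (h : Sys V A B) (M : ℕ) (P J : ℤ)
    (hA : ∀ n j, A (n + M) (j + J) = A n j + P) (i j : ℤ) (hi : A 0 j ≤ i) :
    V (i + P) (j + J) = V i j := by
  obtain ⟨n, h1, h2⟩ := h.cover i j hi
  have a0 := hA n j
  have a1 := hA (n + 1) j
  have hB : B (n + M) (j + J) = B n j + P := by
    have e1 := h.succ (n + M) (j + 1 + J)
    have e2 := h.succ n (j + 1)
    have e3 := hA (n + 1) (j + 1)
    rw [show j + 1 + J - 1 = j + J by ring] at e1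
    rw [add_sub_cancel_right] at e2
    rw [show n + 1 + M = n + M + 1 by ring] at e3
    omega
  rw [show n + 1 + M = n + M + 1 by ring] at a1
  by_cases hc : i < B n j
  · have u := h.p12' (h.pre n) i j h1 hc
    have v := h.p12' (h.pre (n + M)) (i + P) (j + J) (by omega) (by omega)
    omega
  · have u := h.p03' (h.pre n) i j (by omega) h2
    have v := h.p03' (h.pre (n + M)) (i + P) (j + J) (by omega) (by omega)
    omega

end Sys

theorem sink_rec (m b : ℕ) (hm : 0 < m) (hb : 0 < b) (x : ℤ) (hx : 1 ≤ x) :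
    sinkVal {m, b, m + b} x.toNat =
      mex {sinkVal {m, b, m + b} (x - m).toNat, sinkVal {m, b, m + b} (x - b).toNat,
        sinkVal {m, b, m + b} (x - m - b).toNat} := by
  obtain ⟨y, hy⟩ : ∃ y : ℕ, x = y + 1 := ⟨(x - 1).toNat, by omega⟩
  have e0 : x.toNat = y + 1 := by omega
  have e1 : (x - m).toNat = y - (m - 1) := by omega
  have e2 : (x - b).toNat = y - (b - 1) := by omega
  have e3 : (x - m - b).toNat = y - (m + b - 1) := by omega
  rw [e0, e1, e2, e3, sinkVal]
  simp only [Finset.image_insert, Finset.image_singleton]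

/-- The index (up to sign) of the first cell of row `j`. -/
def Fl (x0 m b j : ℤ) : ℤ := (x0 - 1 + j * b) / m

theorem Fl_spec (x0 m b j : ℤ) (hm : 0 < m) :
    m * Fl x0 m b j ≤ x0 - 1 + j * b ∧ x0 - 1 + j * b < m * Fl x0 m b j + m := by
  unfold Fl
  have h1 := Int.mul_ediv_add_emod (x0 - 1 + j * b) m
  have h2 := Int.emod_nonneg (x0 - 1 + j * b) hm.ne'
  have h3 := Int.emod_lt_of_pos (x0 - 1 + j * b) hm
  constructor <;> linarith

theorem Fl_diff (x0 m b c j : ℤ) (hm : 0 < m) (h1 : c * m ≤ b) (h2 : b ≤ (c + 1) * m) :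
    Fl x0 m b (j - 1) + c ≤ Fl x0 m b j ∧ Fl x0 m b j ≤ Fl x0 m b (j - 1) + c + 1 := by
  obtain ⟨a1, a2⟩ := Fl_spec x0 m b j hm
  obtain ⟨b1, b2⟩ := Fl_spec x0 m b (j - 1) hm
  constructor
  · have : m * (Fl x0 m b (j - 1) + c) < m * (Fl x0 m b j + 1) := by nlinarith
    have := lt_of_mul_lt_mul_left this hm.le
    omega
  · have : m * Fl x0 m b j < m * (Fl x0 m b (j - 1) + c + 1 + 1) := by nlinarith
    have := lt_of_mul_lt_mul_left this hm.le
    omega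

theorem Fl_shift (x0 m b j t u : ℤ) (hm : 0 < m) (h : t * b = u * m) :
    Fl x0 m b (j - t) = Fl x0 m b j - u := by
  unfold Fl
  have : x0 - 1 + (j - t) * b = x0 - 1 + j * b + (-u) * m := by linear_combination -h
  rw [this, Int.add_mul_ediv_right _ _ hm.ne']
  ring

theorem sys_zero_rec (m b : ℕ) (hm : 0 < m) (hb : 0 < b) (x0 : ℤ) :
    (∀ i j : ℤ, i < - Fl x0 m b j → sinkVal {m, b, m + b} (x0 + i * m + j * b).toNat = 0) ∧
    (∀ i j : ℤ, - Fl x0 m b j ≤ i → sinkVal {m, b, m + b} (x0 + i * m + j * b).toNat =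
      mex {sinkVal {m, b, m + b} (x0 + (i - 1) * m + j * b).toNat,
        sinkVal {m, b, m + b} (x0 + i * m + (j - 1) * b).toNat,
        sinkVal {m, b, m + b} (x0 + (i - 1) * m + (j - 1) * b).toNat}) := by
  have hm' : (0 : ℤ) < m := by exact_mod_cast hm
  constructor
  · intro i j h
    obtain ⟨a1, a2⟩ := Fl_spec x0 m b j hm'
    have : x0 + i * m + j * b ≤ 0 := by
      have : i + 1 + Fl x0 m b j ≤ 0 := by omega
      nlinarith
    rw [Int.toNat_of_nonpos this, sinkVal]
  · intro i j h
    obtain ⟨a1, a2⟩ := Fl_spec x0 m b j hm'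
    have : 1 ≤ x0 + i * m + j * b := by
      have : 0 ≤ i + Fl x0 m b j := by omega
      nlinarith
    rw [sink_rec m b hm hb _ this]
    congr 3 <;> ring_nf

theorem case1 (m b K : ℕ) (hm : 0 < m) (hK : 2 ≤ K) (hK2 : K % 2 = 0)
    (h1 : ((K : ℤ) - 1) * m ≤ b) (h2 : b ≤ K * m) (x : ℕ) (hx : 1 ≤ x) :
    sinkVal {m, b, m + b} (x + (K * m + b)) = sinkVal {m, b, m + b} x := by
  have hm' : (0 : ℤ) < m := by exact_mod_cast hm
  have hb : 0 < b := by
    have : (0 : ℤ) < b := by nlinarith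
    exact_mod_cast this
  obtain ⟨z, r⟩ := sys_zero_rec m b hm hb x
  have hd := fun j => Fl_diff x m b (K - 1) j hm' h1 (by push_cast; rw [sub_add_cancel]; exact_mod_cast h2)
  have S : Sys (fun i j => sinkVal {m, b, m + b} ((x : ℤ) + i * m + j * b).toNat)
      (fun n j => - Fl x m b (j - n) + n * K) (fun n j => - Fl x m b (j - n) + n * K + K) := by
    constructor
    · intro i j h; apply z; simpa using h
    · intro i j h; apply r; simpa using h
    · intro n j
      rw [show j - ((n + 1 : ℕ) : ℤ) = j - 1 - n by push_cast; ring]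
      push_cast; ring
    · intro n j; generalize (n : ℤ) * K = nK; omega
    · intro n j; generalize (n : ℤ) * K = nK; omega
    · intro n j
      have := hd (j - n)
      rw [show j - 1 - (n : ℤ) = j - n - 1 by ring]
      generalize (n : ℤ) * K = nK
      omega
    · intro n j
      have := hd (j - n)
      rw [show j - 1 - (n : ℤ) = j - n - 1 by ring]
      generalize (n : ℤ) * K = nK
      omega
    · intro n j
      have := hd (j - n)
      rw [show j - 1 - (n : ℤ) = j - n - 1 by ring]
      generalize (n : ℤ) * K = nK
      omega
  have := S.shift 1 K 1 (fun n j => by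
    rw [show j + 1 - ((n + 1 : ℕ) : ℤ) = j - n by push_cast; ring]
    push_cast; ring) 0 0 (by
      have : 0 ≤ Fl x m b 0 := by
        unfold Fl
        apply Int.ediv_nonneg <;> omega
      simpa using this)
  simp only [zero_add, zero_mul, add_zero, one_mul, Int.toNat_natCast] at this
  rw [← this]
  congr 1
  have : (x : ℤ) + K * m + b = ((x + (K * m + b) : ℕ) : ℤ) := by push_cast; ring
  rw [this, Int.toNat_natCast]

theorem case2 (m b K M u p : ℕ) (hm : 0 < m) (hK : 2 ≤ K) (hK2 : K % 2 = 0)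
    (h1 : K * m ≤ b) (h2 : b ≤ (K + 1) * m) (hM : M * b = u * m)
    (hp : (p : ℤ) = (3 * u - M * K) * m) (x : ℕ) (hx : 1 ≤ x) :
    sinkVal {m, b, m + b} (x + p) = sinkVal {m, b, m + b} x := by
  have hm' : (0 : ℤ) < m := by exact_mod_cast hm
  have hb : 0 < b := by nlinarith
  have hM' : (M : ℤ) * b = u * m := by exact_mod_cast hM
  obtain ⟨z, r⟩ := sys_zero_rec m b hm hb x
  have hd := fun j => Fl_diff x m b K j hm' (by exact_mod_cast h1) (by exact_mod_cast h2)
  have S : Sys (fun i j => sinkVal {m, b, m + b} ((x : ℤ) + i * m + j * b).toNat)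
      (fun n j => - 2 * Fl x m b (j - 2 * n) + Fl x m b (j - n) - n * K)
      (fun n j => - 2 * Fl x m b (j - 2 * n - 1) + Fl x m b (j - n) - n * K - K) := by
    constructor
    · intro i j h; apply z; simp at h; linarith
    · intro i j h; apply r; simp at h; linarith
    · intro n j
      rw [show j - ((n + 1 : ℕ) : ℤ) = j - 1 - n by push_cast; ring,
        show j - 2 * ((n + 1 : ℕ) : ℤ) = j - 1 - 2 * n - 1 by push_cast; ring]
      push_cast; ring
    · intro n j;
      generalize (n : ℤ) * K = nK
      omega
    · intro n j;
      have := hd (j - 2 * n)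
      generalize (n : ℤ) * K = nK
      omega
    · intro n j
      have := hd (j - n)
      rw [show j - 1 - (n : ℤ) = j - n - 1 by ring, show j - 1 - 2 * (n : ℤ) = j - 2 * n - 1 by ring]
      generalize (n : ℤ) * K = nK
      omega
    · intro n j
      have := hd (j - n)
      rw [show j - 1 - (n : ℤ) = j - n - 1 by ring, show j - 1 - 2 * (n : ℤ) = j - 2 * n - 1 by ring]
      generalize (n : ℤ) * K = nK
      omega
    · intro n j
      have := hd (j - n)
      have := hd (j - 2 * n)
      rw [show j - 1 - (n : ℤ) = j - n - 1 by ring, show j - 1 - 2 * (n : ℤ) = j - 2 * n - 1 by ring]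
      generalize (n : ℤ) * K = nK
      omega
  have := S.shift M (3 * u - M * K) 0 (fun n j => by
    simp only [add_zero]
    rw [show j - ((n + M : ℕ) : ℤ) = j - n - M by push_cast; ring,
      show j - 2 * ((n + M : ℕ) : ℤ) = j - 2 * n - (2 * M) by push_cast; ring,
      Fl_shift x m b (j - n) M u hm' hM',
      Fl_shift x m b (j - 2 * n) (2 * M) (2 * u) hm' (by linear_combination 2 * hM')]
    push_cast; ring) 0 0 (by
      have : 0 ≤ Fl x m b 0 := by
        unfold Fl
        apply Int.ediv_nonneg <;> omega
      simp; linarith)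
  simp only [zero_add, zero_mul, add_zero, Int.toNat_natCast] at this
  rw [← this]
  congr 1
  rw [← hp]
  omega

theorem stmt4 (m δ : ℕ) (hm : 0 < m) (hδ : 0 < δ)
    (S : Finset ℕ) (hS : S = {m, m + δ, 2 * m + δ})
    (d : ℕ) (hd : d = δ % (2 * m))
    (p : ℕ)
    (hp : p = if d ≤ m then 3 * m + 2 * δ - d
              else m * (m + 2 * δ + d) / Nat.gcd m d) :
    Nat.gcd m d ∣ m * (m + 2 * δ + d) ∧
      ∀ x : ℕ, 1 ≤ x → sinkVal S (x + p) = sinkVal S x := by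
  have hdvd : Nat.gcd m d ∣ m * (m + 2 * δ + d) := (Nat.gcd_dvd_left m d).mul_right _
  refine ⟨hdvd, fun x hx => ?_⟩
  have hS' : S = {m, m + δ, m + (m + δ)} := by rw [hS]; congr 3; ring
  obtain ⟨q, hq⟩ : ∃ q, δ = 2 * m * q + d := ⟨δ / (2 * m), by rw [hd, Nat.div_add_mod]⟩
  have hdlt : d < 2 * m := by rw [hd]; exact Nat.mod_lt _ (by omega)
  rw [hS']
  split_ifs at hp with hc
  · have hpe : p = (2 * q + 2) * m + (m + δ) := by
      rw [hp, hq]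
      have : (2 * q + 2) * m = 2 * m * q + 2 * m := by ring
      omega
    rw [hpe]
    refine case1 m (m + δ) (2 * q + 2) hm (by omega) (by omega) ?_ ?_ x hx
    · rw [hq]; push_cast; nlinarith
    · rw [hq]; nlinarith
  · obtain ⟨M, hM⟩ := Nat.gcd_dvd_left m d
    obtain ⟨D, hD⟩ := Nat.gcd_dvd_right m d
    have hg : 0 < Nat.gcd m d := Nat.gcd_pos_of_pos_left _ hm
    have hp2 : p = M * (m + 2 * δ + d) := by
      rw [hp]
      apply Nat.div_eq_of_eq_mul_right hg
      rw [← mul_assoc, ← hM]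
    generalize Nat.gcd m d = g at *
    refine case2 m (m + δ) (2 * q + 2) M ((2 * q + 1) * M + D) p hm (by omega) (by omega)
      ?_ ?_ ?_ ?_ x hx
    · rw [hq]; nlinarith
    · rw [hq]; nlinarith
    · rw [hq]
      have : M * d = D * m := by rw [hD, hM]; ring
      linear_combination this
    · have : (M : ℤ) * d = D * m := by rw [hD, hM]; push_cast; ring
      rw [hp2, hq]; push_cast; linear_combination 3 * this
end

section
/- Let m and δ be positive integers, let S = {m, m+δ, 2m+δ}, and let d = δ mod 2m. If m < d < 2m, then gcd(m,d) divides m·(m + 2δ + d), and for every x ≥ 1, v_S(x + m·(m + 2δ + d)/gcd(m,d)) = v_S(x); that is, the nim-sequence of S is purely periodic with period m·(m + 2δ + d)/gcd(m,d). -/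
/-- representative of `y` modulo `m` in `(0, m]` -/
def ph (m y : ℤ) : ℤ := (y - 1) % m + 1

/-- start of the `j`-th 1/2-phase in the column of `x` -/
def aa (m e n j x : ℤ) : ℤ := (2 * n + e) * j + 2 * ph m (x - 2 * e * j) - ph m (x - e * j)

/-- parity defect -/
def ep (m e j x : ℤ) : ℤ := if ph m (x - e * j) ≤ e then 1 else 0

/-- half length of the `j`-th 1/2-phase -/
def HH (m e h j x : ℤ) : ℤ := h + if ph m (x - 2 * e * j) ≤ e then 1 else 0

lemma ph_congr (m y z k : ℤ) (h : y = z + m * k) : ph m y = ph m z := by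
  unfold ph
  rw [h, show z + m * k - 1 = z - 1 + m * k by ring, Int.add_mul_emod_self_left]

lemma ph_sub (m e y : ℤ) (he : 0 < e) (hem : e < m) :
    ph m (y - e) = ph m y - e + m * (if ph m y ≤ e then 1 else 0) := by
  unfold ph
  have h1 := Int.emod_nonneg (y - 1) (show m ≠ 0 by omega)
  have h2 := Int.emod_lt_of_pos (y - 1) (show 0 < m by omega)
  have h3 := Int.emod_add_mul_ediv (y - 1) m
  set t := (y - 1) % m
  have h4 : y - e - 1 = (t - e) + m * ((y - 1) / m) := by linarith
  rw [h4, Int.add_mul_emod_self_left]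
  split_ifs with hc
  · have : (t - e) % m = (t - e + m) % m := by simp
    rw [this, Int.emod_eq_of_lt (by omega) (by omega)]; ring
  · rw [Int.emod_eq_of_lt (by omega) (by omega)]; ring

lemma ph_bd (m y : ℤ) (hm : 0 < m) : 1 ≤ ph m y ∧ ph m y ≤ m := by
  unfold ph
  have h1 := Int.emod_nonneg (y - 1) (show m ≠ 0 by omega)
  have h2 := Int.emod_lt_of_pos (y - 1) hm
  omega

lemma ph_dvd (m y : ℤ) : ∃ k, y = ph m y + m * k := by
  refine ⟨(y - 1) / m, ?_⟩
  unfold ph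
  have h3 := Int.emod_add_mul_ediv (y - 1) m
  linarith

lemma R1a (m e n j x : ℤ) : aa m e n j (x - m) = aa m e n j x := by
  unfold aa
  rw [ph_congr m (x - m - 2 * e * j) (x - 2 * e * j) (-1) (by ring),
    ph_congr m (x - m - e * j) (x - e * j) (-1) (by ring)]

lemma R1e (m e j x : ℤ) : ep m e j (x - m) = ep m e j x := by
  unfold ep
  rw [ph_congr m (x - m - e * j) (x - e * j) (-1) (by ring)]

lemma R1H (m e h j x : ℤ) : HH m e h j (x - m) = HH m e h j x := by
  unfold HH
  rw [ph_congr m (x - m - 2 * e * j) (x - 2 * e * j) (-1) (by ring)]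

lemma R3 (m e h n j x : ℤ) (he : 0 < e) (hem : e < m) (hn : n = 2 * h * m + e) :
    aa m e n (j + 1) x = aa m e n j (x - n) + 2 * HH m e h j (x - n) * m + n := by
  unfold aa HH
  rw [ph_congr m (x - n - 2 * e * j) (x - 2 * e * j - e) (-2 * h) (by rw [hn]; ring),
    ph_congr m (x - n - e * j) (x - e * (j + 1)) (-2 * h) (by rw [hn]; ring),
    show x - 2 * e * (j + 1) = (x - 2 * e * j - e) - e by ring,
    ph_sub m e (x - 2 * e * j - e) he hem]
  generalize (if ph m (x - 2 * e * j - e) ≤ e then (1 : ℤ) else 0) = t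
  rw [hn]; ring

lemma R4 (m e h n j x : ℤ) (he : 0 < e) (hem : e < m) (hn : n = 2 * h * m + e) :
    aa m e n j (x - n) + n + ep m e j x * m = aa m e n j x + 2 * HH m e h j x * m := by
  unfold aa HH ep
  rw [ph_congr m (x - n - 2 * e * j) (x - 2 * e * j - e) (-2 * h) (by rw [hn]; ring),
    ph_congr m (x - n - e * j) (x - e * j - e) (-2 * h) (by rw [hn]; ring),
    ph_sub m e (x - 2 * e * j) he hem, ph_sub m e (x - e * j) he hem]
  generalize (if ph m (x - 2 * e * j) ≤ e then (1 : ℤ) else 0) = t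
  generalize (if ph m (x - e * j) ≤ e then (1 : ℤ) else 0) = s
  rw [hn]; ring

lemma R5e (m e h n j x : ℤ) (hn : n = 2 * h * m + e) :
    ep m e j (x - n) = ep m e (j + 1) x := by
  unfold ep
  rw [ph_congr m (x - n - e * j) (x - e * (j + 1)) (-2 * h) (by rw [hn]; ring)]

lemma R5H (m e h n j x : ℤ) (hn : n = 2 * h * m + e) :
    HH m e h j (x - n - n) = HH m e h (j + 1) x := by
  unfold HH
  rw [ph_congr m (x - n - n - 2 * e * j) (x - 2 * e * (j + 1)) (-4 * h) (by rw [hn]; ring)]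

lemma ep_bd (m e j x : ℤ) : ep m e j x = 0 ∨ ep m e j x = 1 := by
  unfold ep; split_ifs <;> simp

lemma HH_bd (m e h j x : ℤ) : h ≤ HH m e h j x := by
  unfold HH; split_ifs <;> simp

lemma mex_eq (A : Finset ℕ) (k : ℕ) (h : k ∉ A) (h2 : ∀ i < k, i ∈ A) : mex A = k := by
  unfold mex
  apply le_antisymm
  · exact Nat.sInf_le h
  · apply le_csInf ⟨k, h⟩
    intro b hb
    by_contra hc
    exact hb (h2 b (by omega))

lemma mex3 (a b c k : ℕ) (h : k ≠ a ∧ k ≠ b ∧ k ≠ c)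
    (h2 : ∀ i < k, i = a ∨ i = b ∨ i = c) : mex {a, b, c} = k := by
  apply mex_eq
  · simpa using h
  · intro i hi
    simpa using h2 i hi

lemma aa_pos (m e n j x : ℤ) (he : 0 < e) (hem : e < m) (hn : m < n) (hj : 0 ≤ j) :
    1 ≤ aa m e n j x := by
  have b1 := ph_bd m (x - 2 * e * j) (by omega)
  have b2 := ph_bd m (x - e * j) (by omega)
  rcases eq_or_lt_of_le hj with h | h
  · subst h
    unfold aa
    simp at *
    omega
  · unfold aa
    nlinarith

lemma finA (F1 F2 F3 : ℕ) (i k H ε : ℤ) (hε : ε = 0 ∨ ε = 1) (hk : k = 2 * H - ε - i)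
    (hi : i < 2 * H) (q1 : F1 = if i % 2 = 0 then 2 else 1)
    (q2 : (k = 0 ∧ F2 = 1) ∨ (1 ≤ k ∧ ((F2 = if k % 2 = 0 then 3 else 0) ∨ F2 = 0)))
    (q3 : (F3 = if (k + 1) % 2 = 0 then 3 else 0) ∨ F3 = 0) :
    mex {F1, F2, F3} = if i % 2 = 0 then 1 else 2 := by
  have q3' : F3 = 0 ∨ (F3 = 3 ∧ (k + 1) % 2 = 0) := by
    clear * - q3
    split_ifs at q3 <;> omega
  have q2' : (k = 0 ∧ F2 = 1) ∨ (1 ≤ k ∧ (F2 = 0 ∨ (F2 = 3 ∧ k % 2 = 0))) := by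
    clear * - q2
    split_ifs at q2 <;> omega
  clear q2 q3
  refine mex3 _ _ _ _ ?_ ?_
  · split_ifs at q1 ⊢ <;> omega
  · intro t ht
    split_ifs at q1 ht <;> omega

lemma finB (F1 F2 F3 : ℕ) (i k H ε : ℤ) (hε : ε = 0 ∨ ε = 1) (hk : k = 2 * H - i)
    (q1 : (i < 2 * H - ε ∧ F1 = if (i + 1) % 2 = 0 then 3 else 0) ∨ (i = 2 * H - ε ∧ F1 = 2))
    (q2 : F2 = if k % 2 = 0 then 1 else 2)
    (q3 : (1 ≤ k ∧ F3 = if k % 2 = 0 then 2 else 1) ∨ (k = 0 ∧ F3 = 0)) :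
    mex {F1, F2, F3} = if i % 2 = 0 then 3 else 0 := by
  rcases q1 with ⟨q0, q1⟩ | ⟨q0, q1⟩ <;> rcases q3 with ⟨q4, q3⟩ | ⟨q4, q3⟩ <;>
    refine mex3 _ _ _ _ ?_ ?_
  all_goals first
    | (intro t ht; split_ifs at q1 q2 q3 ht <;> omega)
    | (split_ifs at q1 q2 q3 ⊢ <;> omega)

set_option maxHeartbeats 2000000 in
/-- the phase-A/phase-B value claim -/
theorem main_val (m e h n : ℤ) (he : 0 < e) (hem : e < m) (hh : 1 ≤ h)
    (hn : n = 2 * h * m + e) (f : ℤ → ℕ) (f0 : ∀ x ≤ 0, f x = 0)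
    (f1 : ∀ x ≥ 1, f x = mex {f (x - m), f (x - n), f (x - n - m)}) (N : ℕ) :
    ∀ x : ℤ, x.toNat ≤ N → 1 ≤ x → ∀ j, 0 ≤ j → ∀ i,
      (x = aa m e n j x + i * m → 0 ≤ i → i < 2 * HH m e h j x →
        f x = if i % 2 = 0 then 1 else 2) ∧
      (x = aa m e n (j + 1) x - i * m → 1 ≤ i → i ≤ 2 * HH m e h j (x - n) - ep m e j x →
        f x = if i % 2 = 0 then 3 else 0) := by
  have hmpos : 0 < m := by omega
  have hnpos : m < n := by nlinarith
  induction N with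
  | zero => intro x h1 h2; omega
  | succ N ih =>
  intro x hx hx1 j hj i
  -- the value for `x - m`
  have a0 : ∀ y, aa m e n 0 y = ph m y := by intro y; simp [aa]; ring
  have hprev : ∀ (y j : ℤ), 0 ≤ j → y.toNat ≤ N + 1 → 1 ≤ y → y = aa m e n j y → f (y - m) = 0 := by
    intro y j hj hy hy1 h1
    rcases lt_or_ge (y - m) 1 with h3 | h3
    · exact f0 _ (by omega)
    rcases eq_or_lt_of_le hj with h2 | h2
    · subst h2
      rw [a0] at h1
      have := ph_bd m y hmpos
      omega
    · have := (ih (y - m) (by omega) h3 (j - 1) (by omega) 1).2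
        (by rw [R1a, show j - 1 + 1 = j by ring]; linarith) (by omega)
        (by
          have := HH_bd m e h (j - 1) (y - m - n)
          have := ep_bd m e (j - 1) (y - m)
          omega)
      simpa using this
  have hBB : ∀ y, y.toNat ≤ N → ∀ j, 0 ≤ j → ∀ k, y = aa m e n j y - k * m → 1 ≤ k →
      (1 ≤ j → k ≤ 2 * HH m e h (j - 1) (y - n) - ep m e (j - 1) y) →
      (f y = if k % 2 = 0 then 3 else 0) ∨ f y = 0 := by
    intro y hy j hj k h1 h2 h3
    rcases lt_or_ge y 1 with h4 | h4
    · right; exact f0 _ (by omega)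
    rcases eq_or_lt_of_le hj with h5 | h5
    · exfalso
      rw [← h5, a0] at h1
      have hp := ph_bd m y hmpos
      have hkm : 1 * m ≤ k * m := mul_le_mul_of_nonneg_right h2 hmpos.le
      linarith
    · left
      exact (ih y hy h4 (j - 1) (by omega) k).2 (by rw [show j - 1 + 1 = j by ring]; exact h1)
        h2 (h3 h5)
  have r4 := R4 m e h n j x he hem hn
  have r3 := R3 m e h n j x he hem hn
  have e1 := ep_bd m e j x
  have H1 := HH_bd m e h j x
  have H2 := HH_bd m e h j (x - n)
  have hxm : (x - m).toNat ≤ N := by omega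
  have hxn : (x - n).toNat ≤ N := by omega
  have hxnm : (x - n - m).toNat ≤ N := by omega
  constructor
  · -- phase A
    intro h1 h2 h3
    have hz : (0 < i → f (x - m) = if i % 2 = 0 then 2 else 1) ∧ (i = 0 → f (x - m) = 0) := by
      constructor
      · intro hi
        have hx2 : 1 ≤ x - m := by
          have hap := aa_pos m e n j x he hem hnpos hj
          have hkm : 1 * m ≤ i * m := mul_le_mul_of_nonneg_right hi hmpos.le
          linarith
        have := (ih (x - m) hxm hx2 j hj (i - 1)).1
          (by rw [R1a]; linarith) (by omega) (by rw [R1H]; omega)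
        rw [this]
        split_ifs <;> omega
      · intro hi
        exact hprev x j hj hx hx1 (by rw [hi] at h1; linarith)
    have e0 : 0 ≤ ep m e j x ∧ ep m e j x ≤ 1 := by rcases e1 with q | q <;> rw [q] <;> simp
    obtain ⟨hz1, hz2⟩ := hz
    obtain ⟨k, hk⟩ : ∃ k, k = 2 * HH m e h j x - ep m e j x - i := ⟨_, rfl⟩
    have hki : i = 0 → 1 ≤ k := by
      intro hi0
      linarith [e0.2]
    have hkn : 0 ≤ k := by
      have : i + 1 ≤ 2 * HH m e h j x := h3
      linarith [e0.2]
    have hkx : x - n = aa m e n j (x - n) - k * m := by rw [hk]; linarith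
    have hbd : 1 ≤ j → 2 * HH m e h (j - 1) (x - n - n) - ep m e (j - 1) (x - n)
        = 2 * HH m e h j x - ep m e j x := by
      intro _
      rw [R5H m e h n (j - 1) x hn, R5e m e h n (j - 1) x hn, show j - 1 + 1 = j by ring]
    have hB : 1 ≤ k → (f (x - n) = if k % 2 = 0 then 3 else 0) ∨ f (x - n) = 0 := by
      intro hk1
      exact hBB (x - n) hxn j hj k hkx hk1 (fun hj1 => by rw [hbd hj1]; linarith)
    have hB0 : k = 0 → f (x - n) = 1 := by
      intro hk0
      rw [hk0] at hkx
      have := aa_pos m e n j (x - n) he hem hnpos hj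
      have := (ih (x - n) hxn (by linarith) j hj 0).1 (by linarith) le_rfl
        (by linarith)
      simpa using this
    have hC : 1 ≤ i → (f (x - n - m) = if (k + 1) % 2 = 0 then 3 else 0) ∨ f (x - n - m) = 0 := by
      intro hi
      refine hBB (x - n - m) hxnm j hj (k + 1) (by rw [R1a]; linarith)
        (by linarith) (fun hj1 => ?_)
      rw [show x - n - m - n = x - n - n - m by ring, R1H, R1e, hbd hj1]; linarith
    have hC0 : i = 0 → f (x - n - m) = 2 ∨ f (x - n - m) = 0 := by
      intro hi
      rcases lt_or_ge (x - n - m) 1 with h4 | h4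
      · right; exact f0 _ (Int.lt_add_one_iff.mp h4)
      rcases eq_or_lt_of_le hj with h5 | h5
      · exfalso
        have hk1 : 1 ≤ k := hki hi
        rw [← h5, a0] at hkx
        have hp := ph_bd m (x - n) hmpos
        have hkm : 1 * m ≤ k * m := mul_le_mul_of_nonneg_right hk1 hmpos.le
        omega
      · left
        have r3' := R3 m e h n (j - 1) x he hem hn
        rw [show j - 1 + 1 = j by ring] at r3'
        have := (ih (x - n - m) hxnm h4 (j - 1) (by linarith [show 1 ≤ j from h5]) (2 * HH m e h (j - 1) (x - n) - 1)).1
          (by rw [R1a]; rw [hi] at h1; linarith)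
          (by have := HH_bd m e h (j - 1) (x - n); linarith) (by rw [R1H]; linarith)
        rw [this, if_neg (by clear * -; omega)]
    rw [f1 x hx1]
    rcases eq_or_lt_of_le h2 with hi | hi
    · rw [if_pos (by rw [← hi]; rfl)]
      have q1 := hz2 hi.symm
      have q2 := hB (hki hi.symm)
      have q3 := hC0 hi.symm
      refine mex3 _ _ _ _ ?_ ?_
      · clear * - q1 q2 q3
        split_ifs at q2 <;> omega
      · intro t ht
        left
        rw [q1]; exact Nat.lt_one_iff.mp ht
    · have q1 := hz1 hi
      have q3 := hC hi
      have q2 : (k = 0 ∧ f (x - n) = 1) ∨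
          (1 ≤ k ∧ ((f (x - n) = if k % 2 = 0 then 3 else 0) ∨ f (x - n) = 0)) := by
        rcases eq_or_lt_of_le hkn with hk0 | hk1
        · exact Or.inl ⟨hk0.symm, hB0 hk0.symm⟩
        · exact Or.inr ⟨hk1, hB hk1⟩
      exact finA _ _ _ i k _ _ e1 hk h3 q1 q2 q3
  · -- phase B
    intro h1 h2 h3
    obtain ⟨k, hk⟩ : ∃ k, k = 2 * HH m e h j (x - n) - i := ⟨_, rfl⟩
    have hkx : x - n = aa m e n j (x - n) + k * m := by rw [hk]; linarith
    have hk0 : 0 ≤ k := by omega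
    have hap := aa_pos m e n j (x - n) he hem hnpos hj
    have hxn1 : 1 ≤ x - n := by
      have hkm : 0 ≤ k * m := mul_nonneg hk0 hmpos.le
      linarith
    have q2 := (ih (x - n) hxn hxn1 j hj k).1 hkx hk0 (by omega)
    have q3 : (1 ≤ k ∧ f (x - n - m) = if k % 2 = 0 then 2 else 1) ∨
        (k = 0 ∧ f (x - n - m) = 0) := by
      rcases eq_or_lt_of_le hk0 with hk1 | hk1
      · right
        refine ⟨hk1.symm, hprev (x - n) j hj (by omega) hxn1 ?_⟩
        rw [← hk1] at hkx; linarith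
      · left
        refine ⟨hk1, ?_⟩
        have hkm : 1 * m ≤ k * m := mul_le_mul_of_nonneg_right hk1 hmpos.le
        have := (ih (x - n - m) hxnm (by linarith) j hj (k - 1)).1
          (by rw [R1a]; linarith) (by omega) (by rw [R1H]; omega)
        rw [this]
        split_ifs <;> omega
    have q1 : (i < 2 * HH m e h j (x - n) - ep m e j x ∧
          f (x - m) = if (i + 1) % 2 = 0 then 3 else 0) ∨
        (i = 2 * HH m e h j (x - n) - ep m e j x ∧ f (x - m) = 2) := by
      rcases eq_or_lt_of_le h3 with h4 | h4
      · right
        refine ⟨h4, ?_⟩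
        have := (ih (x - m) hxm (by omega) j hj (2 * HH m e h j x - 1)).1
          (by rw [R1a]; rw [h4] at h1; linarith) (by omega) (by rw [R1H]; omega)
        rw [this, if_neg (by omega)]
      · left
        refine ⟨h4, ?_⟩
        exact (ih (x - m) hxm (by omega) j hj (i + 1)).2
          (by rw [R1a]; linarith) (by omega)
          (by rw [show x - m - n = x - n - m by ring, R1H, R1e]; omega)
    rw [f1 x hx1]
    exact finB _ _ _ i k _ _ e1 hk q1 q2 q3

/-- every positive position lies in some phase -/
lemma exists_phase (m e h n : ℤ) (he : 0 < e) (hem : e < m) (hh : 1 ≤ h)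
    (hn : n = 2 * h * m + e) (x : ℤ) (hx : 1 ≤ x) :
    ∃ j, 0 ≤ j ∧ ∃ i, (x = aa m e n j x + i * m ∧ 0 ≤ i ∧ i < 2 * HH m e h j x) ∨
      (x = aa m e n (j + 1) x - i * m ∧ 1 ≤ i ∧ i ≤ 2 * HH m e h j (x - n) - ep m e j x) := by
  have hmpos : 0 < m := by omega
  have hstep : ∀ j, aa m e n (j + 1) x =
      aa m e n j x + (2 * HH m e h j x + (2 * HH m e h j (x - n) - ep m e j x)) * m := by
    intro j
    have := R3 m e h n j x he hem hn
    have := R4 m e h n j x he hem hn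
    linarith
  by_contra hc
  push Not at hc
  have key : ∀ N : ℕ, ∃ i : ℤ, 0 ≤ i ∧ x = aa m e n N x + i * m ∧ (N : ℤ) ≤ aa m e n N x := by
    intro N
    induction N with
    | zero =>
      have a0 : aa m e n ((0 : ℕ) : ℤ) x = ph m x := by simp [aa]; ring
      obtain ⟨k, hk⟩ := ph_dvd m x
      have := ph_bd m x hmpos
      rw [a0]
      refine ⟨k, ?_, by linarith, by push_cast; omega⟩
      by_contra h0
      have : k ≤ -1 := by omega
      nlinarith
    | succ N ihN =>
      obtain ⟨i, hi, hxi, hN⟩ := ihN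
      have h1 := hc N (by positivity) i
      have e1 := ep_bd m e N x
      have H1 := HH_bd m e h N x
      have H2 := HH_bd m e h N (x - n)
      have h2 : 2 * HH m e h N x ≤ i := h1.1 hxi hi
      have h3 := hstep N
      push_cast
      obtain ⟨L, hL⟩ : ∃ L, L = 2 * HH m e h N x + (2 * HH m e h N (x - n) - ep m e N x) :=
        ⟨_, rfl⟩
      rw [← hL] at h3
      have hL1 : 1 ≤ L := by omega
      refine ⟨i - L, ?_, by rw [h3]; linarith, by rw [h3]; nlinarith⟩
      by_contra h4
      have h5 := (hc N (by positivity) (L - i)).2 (by rw [h3]; linarith) (by omega)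
      omega
  obtain ⟨i, hi, h1, h2⟩ := key (x.toNat + 1)
  push_cast at h1 h2
  nlinarith [Int.self_le_toNat x]

theorem stmt6 (m δ : ℕ) (hm : 0 < m) (hδ : 0 < δ)
    (S : Finset ℕ) (hS : S = {m, m + δ, 2 * m + δ})
    (d : ℕ) (hd : d = δ % (2 * m)) (hdm : m < d) :
    Nat.gcd m d ∣ m * (m + 2 * δ + d) ∧
      ∀ x : ℕ, 1 ≤ x →
        sinkVal S (x + m * (m + 2 * δ + d) / Nat.gcd m d) = sinkVal S x := by
  refine ⟨(Nat.gcd_dvd_left m d).mul_right _, ?_⟩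
  intro x hx
  obtain ⟨q, hq⟩ := Nat.gcd_dvd_left m d
  obtain ⟨r, hr⟩ := Nat.gcd_dvd_right m d
  have hg : 0 < Nat.gcd m d := Nat.gcd_pos_of_pos_left d hm
  have hP : m * (m + 2 * δ + d) / Nat.gcd m d = q * (m + 2 * δ + d) := by
    apply Nat.div_eq_of_eq_mul_right hg
    calc m * (m + 2 * δ + d) = (Nat.gcd m d * q) * (m + 2 * δ + d) := by rw [← hq]
      _ = _ := by ring
  rw [hP]
  have hqd : q * d = m * r := by
    calc q * d = q * (Nat.gcd m d * r) := by rw [← hr]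
      _ = (Nat.gcd m d * q) * r := by ring
      _ = m * r := by rw [← hq]
  clear hP hr hq hg
  have hlt : d < 2 * m := by rw [hd]; exact Nat.mod_lt _ (by omega)
  have hδd : d + 2 * m * (δ / (2 * m)) = δ := by rw [hd]; exact Nat.mod_add_div _ _
  generalize δ / (2 * m) = k at hδd
  clear hd
  -- integer version
  obtain ⟨M, hM⟩ : ∃ M : ℤ, M = m := ⟨_, rfl⟩
  obtain ⟨e, he⟩ : ∃ e : ℤ, e = d - m := ⟨_, rfl⟩
  obtain ⟨h, hh⟩ : ∃ h : ℤ, h = k + 1 := ⟨_, rfl⟩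
  obtain ⟨n, hn'⟩ : ∃ n : ℤ, n = m + δ := ⟨_, rfl⟩
  have hδZ : (d : ℤ) + 2 * m * k = δ := by exact_mod_cast hδd
  have hqdZ : (q : ℤ) * d = m * r := by exact_mod_cast hqd
  have hn : n = 2 * h * M + e := by rw [hn', hh, hM, he, ← hδZ]; ring
  have he0 : 0 < e := by omega
  have heM : e < M := by omega
  have hh1 : 1 ≤ h := by omega
  have hv := main_val M e h n he0 heM hh1 hn (fun z => sinkVal S z.toNat)
    (by
      intro z hz
      rw [Int.toNat_of_nonpos hz]
      simp [sinkVal])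
    (by
      intro z hz
      obtain ⟨y, hy⟩ : ∃ y : ℕ, z = y + 1 := ⟨(z - 1).toNat, by omega⟩
      rw [show z.toNat = y + 1 by omega, show (z - M).toNat = y - (m - 1) by omega,
        show (z - n).toNat = y - (m + δ - 1) by omega,
        show (z - n - M).toNat = y - (2 * m + δ - 1) by omega, sinkVal, hS]
      simp only [Finset.image_insert, Finset.image_singleton])
  obtain ⟨P, hP⟩ : ∃ P : ℕ, P = q * (m + 2 * δ + d) := ⟨_, rfl⟩
  rw [← hP]
  have hPn : (P : ℤ) = (2 * n + e) * q := by
    rw [hP, hn', he]; push_cast; ring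
  have hqe : e * q = M * (r - q) := by
    rw [he, hM]; linear_combination hqdZ
  have hPM : (P : ℤ) = M * (4 * h * q + 3 * (r - q)) := by
    rw [hPn, hn]; linear_combination 3 * hqe
  have pA : ∀ j y, aa M e n (j + q) (y + P) = aa M e n j y + P := by
    intro j y
    unfold aa
    rw [ph_congr M (y + P - 2 * e * (j + q)) (y - 2 * e * j)
        (4 * h * q + 3 * (r - q) - 2 * (r - q)) (by linear_combination hPM - 2 * hqe),
      ph_congr M (y + P - e * (j + q)) (y - e * j)
        (4 * h * q + 3 * (r - q) - (r - q)) (by linear_combination hPM - hqe)]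
    rw [hPn]; ring
  have pE : ∀ j y, ep M e (j + q) (y + P) = ep M e j y := by
    intro j y
    unfold ep
    rw [ph_congr M (y + P - e * (j + q)) (y - e * j)
        (4 * h * q + 3 * (r - q) - (r - q)) (by linear_combination hPM - hqe)]
  have pH : ∀ j y, HH M e h (j + q) (y + P) = HH M e h j y := by
    intro j y
    unfold HH
    rw [ph_congr M (y + P - 2 * e * (j + q)) (y - 2 * e * j)
        (4 * h * q + 3 * (r - q) - 2 * (r - q)) (by linear_combination hPM - 2 * hqe)]
  obtain ⟨j, hj, i, hji⟩ := exists_phase M e h n he0 heM hh1 hn x (by omega)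
  have v1 := hv (x + P) ((x : ℤ)) (by omega) (by omega) j hj i
  have v2 := hv (x + P) ((x : ℤ) + P) (by omega) (by omega) (j + q) (by omega) i
  simp only [Int.toNat_natCast, ← Nat.cast_add] at v1 v2
  push_cast at v2
  rw [show (x : ℤ) + P - n = x - n + P by ring, show j + q + 1 = j + 1 + q by ring,
    pA, pA, pE, pH, pH] at v2
  rcases hji with ⟨h1, h2, h3⟩ | ⟨h1, h2, h3⟩
  · rw [v2.1 (by linarith) h2 h3, v1.1 h1 h2 h3]
  · rw [v2.2 (by linarith) h2 h3, v1.2 h1 h2 h3]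
end

section
/- Let m and δ be positive integers with d = δ mod 2m satisfying d ≤ m, and let S = {m, m+δ, 2m+δ}. Then for every integer r with 1 ≤ r ≤ m, v_S(2m + δ + r) = 0. (This is the factor 0^m of the period, occupying positions 2m + δ + 1 through 3m + δ.) -/
theorem mex_eq_zero_iff' (A : Finset ℕ) : mex A = 0 ↔ 0 ∉ A := by
  obtain ⟨k, hk⟩ := Infinite.exists_notMem_finset A
  unfold mex
  rw [Nat.sInf_eq_zero]
  constructor
  · rintro (h | h)
    · exact h
    · have : k ∈ {n : ℕ | n ∉ A} := hk
      rw [h] at this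
      exact this.elim
  · intro h
    exact Or.inl h

/-- A positive position has value zero iff no move reaches a position of value zero. -/
theorem sinkVal_succ_eq_zero_iff (S : Finset ℕ) (x : ℕ) :
    sinkVal S (x + 1) = 0 ↔ ∀ s ∈ S, sinkVal S (x - (s - 1)) ≠ 0 := by
  rw [sinkVal, mex_eq_zero_iff']
  simp

theorem stmt10 (m δ : ℕ) (hm : 0 < m) (hδ : 0 < δ)
    (S : Finset ℕ) (hS : S = {m, m + δ, 2 * m + δ})
    (d : ℕ) (hd : d = δ % (2 * m)) (hdm : d ≤ m) :
    ∀ r : ℕ, 1 ≤ r → r ≤ m → sinkVal S (2 * m + δ + r) = 0 := by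
  have key : ∀ x, x + 1 ≤ 2 * m + δ → sinkVal S (x + 1) ≠ 0 := by
    intro x hx h
    rw [sinkVal_succ_eq_zero_iff] at h
    apply h (2 * m + δ) (by simp [hS])
    rw [show x - (2 * m + δ - 1) = 0 by omega, sinkVal]
  have key' : ∀ y, 1 ≤ y → y ≤ 2 * m + δ → sinkVal S y ≠ 0 := by
    intro y h1 h2
    obtain ⟨x, rfl⟩ := Nat.exists_eq_add_of_le' h1
    exact key x h2
  intro r h1 h2
  rw [show 2 * m + δ + r = (2 * m + δ + r - 1) + 1 by omega, sinkVal_succ_eq_zero_iff]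
  intro s hs
  have hs' : s = m ∨ s = m + δ ∨ s = 2 * m + δ := by simpa [hS] using hs
  apply key' <;> omega
end

section
/- Let m and k be integers with 1 ≤ k < m, let g = gcd(m,k), M = m/g, and K = k/g. Then the map i ↦ (k·i) mod m is injective on {0, 1, …, M−1} and its image is exactly the set {g·j : 0 ≤ j ≤ M−1} of nonnegative multiples of g below m; consequently, exactly K indices i in {0, 1, …, M−1} satisfy (k·i) mod m ≥ m − k, and exactly M − K indices satisfy (k·i) mod m < m − k. -/
theorem stmt16 (m k : ℕ) (hk : 1 ≤ k) (hkm : k < m)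
    (g M K : ℕ) (hg : g = Nat.gcd m k) (hM : M = m / g) (hK : K = k / g) :
    (∀ i ∈ Finset.range M, ∀ j ∈ Finset.range M,
        (k * i) % m = (k * j) % m → i = j) ∧
    (Finset.range M).image (fun i => (k * i) % m) =
      (Finset.range M).image (fun j => g * j) ∧
    ((Finset.range M).filter (fun i => m - k ≤ (k * i) % m)).card = K ∧
    ((Finset.range M).filter (fun i => (k * i) % m < m - k)).card = M - K := by
  have hgpos : 0 < g := hg ▸ Nat.gcd_pos_of_pos_right _ hk
  have hmM : m = g * M := by
    rw [hM, Nat.mul_div_cancel' (hg ▸ Nat.gcd_dvd_left m k)]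
  have hkK : k = g * K := by
    rw [hK, Nat.mul_div_cancel' (hg ▸ Nat.gcd_dvd_right m k)]
  have hcop : Nat.Coprime M K := by
    rw [hM, hK, hg]
    exact Nat.coprime_div_gcd_div_gcd (hg ▸ hgpos)
  have hKM : K < M := by
    rw [hmM, hkK] at hkm
    exact Nat.lt_of_mul_lt_mul_left hkm
  clear hg hM hK
  subst hmM hkK
  have hmod : ∀ i, (g * K * i) % (g * M) = g * ((K * i) % M) := fun i => by
    rw [mul_assoc, Nat.mul_mod_mul_left]
  have hinj : ∀ i ∈ Finset.range M, ∀ j ∈ Finset.range M,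
      (K * i) % M = (K * j) % M → i = j := by
    intro i hi j hj h
    have h2 : i ≡ j [MOD M] := Nat.ModEq.cancel_left_of_coprime hcop h
    exact h2.eq_of_lt_of_lt (Finset.mem_range.1 hi) (Finset.mem_range.1 hj)
  have himg : (Finset.range M).image (fun i => (K * i) % M) = Finset.range M := by
    apply Finset.eq_of_subset_of_card_le
    · intro x hx
      obtain ⟨i, -, rfl⟩ := Finset.mem_image.1 hx
      exact Finset.mem_range.2 (Nat.mod_lt _ (by omega))
    · rw [Finset.card_image_of_injOn]
      intro i hi j hj h
      exact hinj i hi j hj h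
  have hcard : ((Finset.range M).filter
      (fun i => g * M - g * K ≤ (g * K * i) % (g * M))).card = K := by
    have h1 : (Finset.range M).filter (fun i => g * M - g * K ≤ (g * K * i) % (g * M))
        = (Finset.range M).filter (fun i => M - K ≤ (K * i) % M) := by
      apply Finset.filter_congr
      intro i _
      rw [hmod, ← Nat.mul_sub, Nat.mul_le_mul_left_iff hgpos]
    have h2 : ((Finset.range M).filter (fun i => M - K ≤ (K * i) % M)).image
        (fun i => (K * i) % M) = Finset.Ico (M - K) M := by
      rw [← Finset.filter_image (p := fun x => M - K ≤ x), himg]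
      ext x
      simp only [Finset.mem_filter, Finset.mem_range, Finset.mem_Ico]
      omega
    rw [h1, ← Finset.card_image_of_injOn (f := fun i => (K * i) % M), h2, Nat.card_Ico]
    · omega
    · intro i hi j hj h
      exact hinj i (Finset.mem_filter.1 hi).1 j (Finset.mem_filter.1 hj).1 h
  refine ⟨?_, ?_, hcard, ?_⟩
  · intro i hi j hj h
    rw [hmod, hmod] at h
    exact hinj i hi j hj (Nat.eq_of_mul_eq_mul_left hgpos h)
  · simp only [hmod]
    conv_rhs => rw [← himg]
    rw [Finset.image_image]
    rfl
  · have h := Finset.card_filter_add_card_filter_not (s := Finset.range M)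
      (fun i => g * M - g * K ≤ (g * K * i) % (g * M))
    simp only [not_le] at h
    rw [hcard, Finset.card_range] at h
    omega
end

section
/- Let m and k be integers with 1 ≤ k < m, let g = gcd(m,k), M = m/g, and K = k/g. Define ℓ(i) = 4m + 2k if (k·i) mod m < m − k and ℓ(i) = 5m + 2k otherwise. Then the total length of one index cycle of the period word P(m,k), namely the sum of ℓ(i) over i = 0, 1, …, M−1, equals m·(4m + 3k)/g. -/
theorem stmt17 (m k : ℕ) (hk : 1 ≤ k) (hkm : k < m)
    (g M K : ℕ) (hg : g = Nat.gcd m k) (hM : M = m / g) (hK : K = k / g)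
    (ℓ : ℕ → ℕ)
    (hℓ : ∀ i, ℓ i = if (k * i) % m < m - k then 4 * m + 2 * k else 5 * m + 2 * k) :
    ∑ i ∈ Finset.range M, ℓ i = m * (4 * m + 3 * k) / g := by
  have hm : 0 < m := by omega
  have key : ∀ n, ∑ i ∈ Finset.range n, ℓ i = n * (4 * m + 2 * k) + m * (k * n / m) := by
    intro n
    induction n with
    | zero => simp
    | succ n ih =>
      rw [Finset.sum_range_succ, ih, hℓ]
      have h1 := Nat.div_add_mod (k * n) m
      have h2 := Nat.mod_lt (k * n) hm
      generalize k * n / m = q at *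
      generalize k * n % m = r at *
      split_ifs with h
      · have : k * (n + 1) / m = q := by
          apply Nat.div_eq_of_lt_le
          · nlinarith
          · have : r + k < m := by omega
            nlinarith
        rw [this]; ring
      · have : k * (n + 1) / m = q + 1 := by
          have : m ≤ r + k := by omega
          apply Nat.div_eq_of_lt_le
          · nlinarith
          · nlinarith
        rw [this]; ring
  have hg0 : 0 < g := hg ▸ Nat.gcd_pos_of_pos_left k hm
  have em : m = g * M := by
    rw [hM, Nat.mul_div_cancel' (hg ▸ Nat.gcd_dvd_left m k)]
  have ek : k = g * K := by
    rw [hK, Nat.mul_div_cancel' (hg ▸ Nat.gcd_dvd_right m k)]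
  have e1 : k * M / m = K := by
    apply Nat.div_eq_of_eq_mul_left hm
    calc k * M = (g * K) * M := by rw [← ek]
      _ = K * (g * M) := by ring
      _ = K * m := by rw [← em]
  rw [key, e1]
  symm
  apply Nat.div_eq_of_eq_mul_left hg0
  calc m * (4 * m + 3 * k) = m * (4 * m + 2 * k) + m * k := by ring
    _ = (g * M) * (4 * m + 2 * k) + m * (g * K) := by rw [← em, ← ek]
    _ = _ := by ring
end
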